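/- Let {ε_n} be a sequence in (0,1) with ε_n → 0 and n·ε_n → ∞, let a ∈ ℝ and t₀ > 0, and set B_n = {p prime : e^{(n+a)/t₀} < p ≤ e^{(n+a+ε_n)/t₀}}. Then there exist constants 0 < c₁ ≤ c₂ < ∞ such that c₁ ε_n/n ≤ ∑_{p ∈ B_n} 1/p ≤ c₂ ε_n/n for all sufficiently large n. -/

import Mathlib

open Real Filter

lemma zz_hd (r : ℂ) {x : ℝ} (hx : 0 < x) :
    HasDerivAt (fun y : ℝ => (y:ℂ)^r) (r * (x:ℂ)^(r-1)) x := by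
  have := (HasDerivAt.cpow_const (c := r) (hasDerivAt_id (x:ℂ)) (Or.inl (by simpa using hx))).comp_ofReal
  simpa using this

lemma zz_diff_bound {m : ℝ} (hm : 1 ≤ m) {u : ℝ} (hu : u ∈ Set.Icc m (m+1)) (s : ℂ) (hs : 0 ≤ s.re) :
    ‖(m:ℂ)^(-s) - (u:ℂ)^(-s)‖ ≤ 2 * m^(-s.re) * (‖s‖/m)^((1:ℝ)/15) := by
  have hm0 : 0 < m := by linarith
  have hu0 : 0 < u := by linarith [hu.1]
  have hk : 0 ≤ m^(-s.re) := by positivity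
  have h2 : ‖(m:ℂ)^(-s) - (u:ℂ)^(-s)‖ ≤ 2 * m^(-s.re) := by
    refine (norm_sub_le _ _).trans ?_
    rw [Complex.norm_cpow_eq_rpow_re_of_pos hm0, Complex.norm_cpow_eq_rpow_re_of_pos hu0]
    have : u ^ (-s).re ≤ m ^ (-s).re :=
      Real.rpow_le_rpow_of_nonpos hm0 hu.1 (by simpa using hs)
    simp only [Complex.neg_re] at *
    linarith
  have h1 : ‖(m:ℂ)^(-s) - (u:ℂ)^(-s)‖ ≤ m^(-s.re) * (‖s‖/m) := by
    have hd : ∀ x ∈ Set.Icc m (m+1), HasDerivWithinAt (fun y : ℝ => (y:ℂ)^(-s)) (-s * (x:ℂ)^(-s-1)) (Set.Icc m (m+1)) x := by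
      intro x hx
      have hx0 : 0 < x := by linarith [hx.1]
      exact (zz_hd (-s) hx0).hasDerivWithinAt
    have hb : ∀ x ∈ Set.Icc m (m+1), ‖-s * (x:ℂ)^(-s-1)‖ ≤ m^(-s.re) * (‖s‖/m) := by
      intro x hx
      have hx0 : 0 < x := by linarith [hx.1]
      rw [norm_mul, norm_neg, Complex.norm_cpow_eq_rpow_re_of_pos hx0]
      have : x ^ (-s-1).re ≤ m ^ (-s-1).re :=
        Real.rpow_le_rpow_of_nonpos hm0 hx.1 (by simp; linarith)
      have e : m ^ (-s-1).re = m^(-s.re) / m := by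
        simp only [Complex.sub_re, Complex.neg_re, Complex.one_re]
        rw [Real.rpow_sub_one hm0.ne']
      rw [e] at this
      calc _ ≤ ‖s‖ * (m^(-s.re) / m) := by gcongr
        _ = _ := by ring
    have := Convex.norm_image_sub_le_of_norm_hasDerivWithin_le hd hb (convex_Icc _ _) hu (Set.left_mem_Icc.2 (by linarith))
    refine this.trans ?_
    have : ‖m - u‖ ≤ 1 := by
      rw [Real.norm_eq_abs, abs_le]; constructor <;> linarith [hu.1, hu.2]
    exact mul_le_of_le_one_right (by positivity) this
  have hq : 0 ≤ ‖s‖/m := by positivity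
  rcases le_total 1 (‖s‖/m) with h | h
  · have : 1 ≤ (‖s‖/m)^((1:ℝ)/15) := Real.one_le_rpow h (by norm_num)
    nlinarith
  · have : ‖s‖/m ≤ (‖s‖/m)^((1:ℝ)/15) := Real.self_le_rpow_of_le_one hq h (by norm_num)
    nlinarith [mul_le_mul_of_nonneg_left this hk, mul_nonneg hk hq]

noncomputable def zze (n : ℕ) (s : ℂ) : ℂ :=
  (((n:ℝ)+1+1 : ℝ):ℂ)^(1-s) - (((n:ℝ)+1 : ℝ):ℂ)^(1-s) + (s-1) * (((n:ℝ)+1 : ℝ):ℂ)^(-s)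

lemma zze_bound (n : ℕ) (s : ℂ) (hs : 0 ≤ s.re) :
    ‖zze n s‖ ≤ ‖s-1‖ * (2 * ((n:ℝ)+1)^(-s.re) * (‖s‖/((n:ℝ)+1))^((1:ℝ)/15)) := by
  by_cases h1 : s = 1
  · subst h1; simp [zze]
  set m : ℝ := (n:ℝ)+1 with hm
  have hm1 : 1 ≤ m := by simp [hm]
  have hd : ∀ x ∈ Set.Icc m (m+1), HasDerivWithinAt (fun y : ℝ => (y:ℂ)^(1-s) + (s-1) * (y:ℂ) * (m:ℂ)^(-s))
      ((s-1) * ((m:ℂ)^(-s) - (x:ℂ)^(-s))) (Set.Icc m (m+1)) x := by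
    intro x hx
    have hx0 : 0 < x := by linarith [hx.1]
    have a1 : HasDerivAt (fun y : ℝ => (y:ℂ)^(1-s)) ((1-s) * (x:ℂ)^(1-s-1)) x :=
      zz_hd _ hx0
    have a2 : HasDerivAt (fun y : ℝ => (s-1) * (y:ℂ) * (m:ℂ)^(-s)) ((s-1) * 1 * (m:ℂ)^(-s)) x :=
      ((Complex.ofRealCLM.hasDerivAt (x := x)).const_mul _).mul_const _
    have := (a1.add a2).hasDerivWithinAt (s := Set.Icc m (m+1))
    have e : (s-1) * ((m:ℂ)^(-s) - (x:ℂ)^(-s)) = (1 - s) * ↑x ^ (1 - s - 1) + (s - 1) * 1 * ↑m ^ (-s) := by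
      rw [show 1 - s - 1 = -s by ring]; ring
    rw [e]; exact this
  have hb : ∀ x ∈ Set.Icc m (m+1), ‖(s-1) * ((m:ℂ)^(-s) - (x:ℂ)^(-s))‖ ≤ ‖s-1‖ * (2 * m^(-s.re) * (‖s‖/m)^((1:ℝ)/15)) := by
    intro x hx
    rw [norm_mul]
    gcongr
    exact zz_diff_bound hm1 hx s hs
  have := Convex.norm_image_sub_le_of_norm_hasDerivWithin_le hd hb (convex_Icc _ _) 
     (Set.left_mem_Icc.2 (by linarith)) (Set.right_mem_Icc.2 (by linarith))
  rw [show m + 1 - m = 1 by ring, norm_one, mul_one] at this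
  refine le_of_eq_of_le ?_ this
  congr 1
  simp only [zze]
  rw [← hm]
  push_cast
  ring

lemma zze_bound' (n : ℕ) (s : ℂ) (hs : 1 - 1/30 ≤ s.re) :
    ‖zze n s‖ ≤ (‖s-1‖ * 2 * ‖s‖^((1:ℝ)/15)) * ((n:ℝ)+1)^(-(31/30:ℝ)) := by
  refine (zze_bound n s (by linarith)).trans ?_
  have hm : (0:ℝ) < (n:ℝ)+1 := by positivity
  rw [Real.div_rpow (norm_nonneg _) hm.le, mul_assoc, mul_assoc]
  have : ((n:ℝ)+1)^(-s.re) / ((n:ℝ)+1)^((1:ℝ)/15) ≤ ((n:ℝ)+1)^(-(31/30:ℝ)) := by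
    rw [← Real.rpow_sub hm]
    exact Real.rpow_le_rpow_of_exponent_le (by simp) (by linarith)
  calc _ = ‖s-1‖ * (2 * (‖s‖^((1:ℝ)/15) * (((n:ℝ)+1)^(-s.re) / ((n:ℝ)+1)^((1:ℝ)/15)))) := by ring
    _ ≤ ‖s-1‖ * (2 * (‖s‖^((1:ℝ)/15) * ((n:ℝ)+1)^(-(31/30:ℝ)))) := by gcongr
    _ = _ := by ring

lemma zz_summ : Summable (fun n : ℕ => ((n:ℝ)+1)^(-(31/30:ℝ))) := by
  have := (summable_nat_add_iff 1).2 (Real.summable_nat_rpow (p := -(31/30:ℝ)) |>.2 (by norm_num))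
  simpa using this

lemma zze_hasSum {s : ℂ} (hs : 1 < s.re) : HasSum (fun n => zze n s) (riemannZeta₁ s - 1) := by
  have h1 : s ≠ 1 := by rintro rfl; simp at hs
  have hz := zeta_eq_tsum_one_div_nat_add_one_cpow hs
  have hsm : Summable (fun n : ℕ => 1 / ((n:ℂ)+1)^s) := by
    have := (Complex.summable_one_div_nat_cpow (p := s)).2 hs
    simpa using (summable_nat_add_iff 1).2 this
  have A : HasSum (fun n : ℕ => (s-1) * (1 / ((n:ℂ)+1)^s)) ((s-1) * riemannZeta s) := by
    rw [hz]; exact hsm.hasSum.mul_left _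
  have hse : Summable (fun n => ‖zze n s‖) :=
    Summable.of_nonneg_of_le (fun _ => norm_nonneg _) (fun n => zze_bound' n s (by linarith)) (zz_summ.mul_left _)
  rw [hasSum_iff_tendsto_nat_of_summable_norm hse]
  have B : Tendsto (fun N : ℕ => (((N:ℝ)+1 : ℝ):ℂ)^(1-s) - 1) atTop (nhds (0 - 1)) := by
    refine Tendsto.sub_const ?_ _
    rw [tendsto_zero_iff_norm_tendsto_zero]
    have : ∀ N : ℕ, ‖(((N:ℝ)+1 : ℝ):ℂ)^(1-s)‖ = ((N:ℝ)+1)^(-(s.re-1)) := by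
      intro N
      rw [Complex.norm_cpow_eq_rpow_re_of_pos (by positivity)]; simp
    simp_rw [this]
    exact (tendsto_rpow_neg_atTop (by linarith)).comp (tendsto_atTop_add_const_right _ _ tendsto_natCast_atTop_atTop)
  have C := B.add A.tendsto_sum_nat
  have e : 0 - 1 + (s-1) * riemannZeta s = riemannZeta₁ s - 1 := by
    rw [riemannZeta_eq_inv_sub_mul h1, mul_inv_cancel_left₀ (sub_ne_zero.2 h1)]; ring
  rw [e] at C
  refine C.congr fun N => ?_
  have tel := Finset.sum_range_sub (fun n : ℕ => (((n:ℝ)+1 : ℝ):ℂ)^(1-s)) N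
  simp only [zze]
  rw [Finset.sum_add_distrib]
  congr 1
  · have e0 : ((((0:ℕ):ℝ)+1 : ℝ):ℂ)^(1-s) = 1 := by simp
    rw [e0] at tel
    rw [← tel]; push_cast; rfl
  · refine Finset.sum_congr rfl fun n _ => ?_
    rw [Complex.cpow_neg]; push_cast; simp

lemma zeta1_bound : ∃ C : ℝ, 0 < C ∧ ∀ s : ℂ, 1 - 1/40 ≤ s.re →
    ‖riemannZeta₁ s - 1‖ ≤ C * (‖s-1‖ * ‖s‖^((1:ℝ)/15)) := by
  set S := ∑' n : ℕ, ((n:ℝ)+1)^(-(31/30:ℝ))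
  have hSp : 0 ≤ S := tsum_nonneg fun _ => by positivity
  refine ⟨2 * S + 1, by positivity, fun s hs => ?_⟩
  have key : riemannZeta₁ s - 1 = ∑' n, zze n s := by
    set R := ‖s‖ + 3
    set U : Set ℂ := {z | 1 - 1/30 < z.re} ∩ Metric.ball 0 R with hU
    have hUo : IsOpen U := (isOpen_lt continuous_const Complex.continuous_re).inter Metric.isOpen_ball
    have hUc : Convex ℝ U := (convex_halfSpace_re_gt _).inter (convex_ball _ _)
    have hd : DifferentiableOn ℂ (fun w : ℂ => ∑' n, zze n w) U := by
      refine Complex.differentiableOn_tsum_of_summable_norm (u := fun n : ℕ => ((R+1) * 2 * R^((1:ℝ)/15)) * ((n:ℝ)+1)^(-(31/30:ℝ))) (zz_summ.mul_left _) ?_ hUo ?_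
      · intro n
        have p1 : (((n:ℝ)+1+1 : ℝ):ℂ) ≠ 0 := by exact_mod_cast (by positivity : ((n:ℝ)+1+1) ≠ 0)
        have p2 : (((n:ℝ)+1 : ℝ):ℂ) ≠ 0 := by exact_mod_cast (by positivity : ((n:ℝ)+1) ≠ 0)
        unfold zze
        refine Differentiable.differentiableOn ?_
        refine ((Differentiable.const_cpow (by fun_prop) (Or.inl p1)).sub (Differentiable.const_cpow (by fun_prop) (Or.inl p2))).add (Differentiable.mul (by fun_prop) (Differentiable.const_cpow (by fun_prop) (Or.inl p2)))
      · intro n w hw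
        refine (zze_bound' n w hw.1.le).trans ?_
        have : ‖w‖ ≤ R := by simpa using (Metric.mem_ball.1 hw.2).le
        have h' : ‖w-1‖ ≤ R+1 := (norm_sub_le _ _).trans (by simpa using this)
        gcongr
    have hd' : AnalyticOnNhd ℂ (fun w : ℂ => riemannZeta₁ w - 1) U :=
      (Differentiable.differentiableOn (by fun_prop)).analyticOnNhd hUo
    refine AnalyticOnNhd.eqOn_of_preconnected_of_eventuallyEq (U := U) (z₀ := 2) hd' (hd.analyticOnNhd hUo) hUc.isPreconnected ?_ ?_ ?_
    · refine ⟨by simp; norm_num, ?_⟩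
      simp [R]; linarith [norm_nonneg s]
    · have : {z : ℂ | 1 < z.re} ∈ nhds (2:ℂ) := (isOpen_lt continuous_const Complex.continuous_re).mem_nhds (by simp)
      filter_upwards [this] with z hz
      exact (zze_hasSum hz).tsum_eq.symm
    · refine ⟨show 1 - 1/30 < s.re by linarith, by simp [R]⟩
  rw [key]
  have hse : ∀ n, ‖zze n s‖ ≤ _ := fun n => zze_bound' n s (by linarith)
  refine (tsum_of_norm_bounded (zz_summ.mul_left _).hasSum hse).trans ?_
  rw [tsum_mul_left]
  change _ * S ≤ _
  have : 0 ≤ ‖s-1‖ * ‖s‖^((1:ℝ)/15) := by positivity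
  nlinarith

noncomputable def zzW (t : ℝ) : ℝ := (3+|t|)^((1:ℝ)/15)

lemma zzW_one (t : ℝ) : 1 ≤ zzW t := Real.one_le_rpow (by linarith [abs_nonneg t]) (by norm_num)
lemma zzW_pow (t : ℝ) : zzW t ^ 15 = 3 + |t| := by
  rw [zzW, ← Real.rpow_natCast, ← Real.rpow_mul (by positivity)]; norm_num
lemma zzW_le {t u : ℝ} (h : 3 + |u| ≤ 2 * (3 + |t|)) : zzW u ≤ 2 * zzW t := by
  have h1 : zzW u ≤ (2 * (3+|t|))^((1:ℝ)/15) := Real.rpow_le_rpow (by positivity) h (by norm_num)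
  rw [Real.mul_rpow (by norm_num) (by positivity)] at h1
  have h2 : (2:ℝ)^((1:ℝ)/15) ≤ 2 := by
    conv_rhs => rw [← Real.rpow_one 2]
    exact Real.rpow_le_rpow_of_exponent_le (by norm_num) (by norm_num)
  have : 0 ≤ (3+|t|)^((1:ℝ)/15) := by positivity
  refine h1.trans ?_
  unfold zzW
  gcongr

lemma zz_upper : ∃ C : ℝ, 0 < C ∧ ∀ s : ℂ, 1 - 1/40 ≤ s.re → s.re ≤ 3 →
    ‖riemannZeta₁ s‖ ≤ C * ((3 + |s.im|) * zzW s.im) := by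
  obtain ⟨C, hC, h⟩ := zeta1_bound
  refine ⟨C + 1, by linarith, fun s h1 h2 => ?_⟩
  have a1 : ‖s‖ ≤ 3 + |s.im| := by
    refine (Complex.norm_le_abs_re_add_abs_im s).trans ?_
    gcongr; rw [abs_le]; constructor <;> linarith
  have a2 : ‖s-1‖ ≤ 3 + |s.im| := by
    refine (Complex.norm_le_abs_re_add_abs_im _).trans ?_
    simp
    rw [abs_le]; constructor <;> linarith
  have a3 : ‖s‖^((1:ℝ)/15) ≤ zzW s.im := Real.rpow_le_rpow (norm_nonneg _) a1 (by norm_num)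
  have b := h s h1
  have c : ‖riemannZeta₁ s‖ ≤ ‖riemannZeta₁ s - 1‖ + 1 := by
    have := norm_add_le (riemannZeta₁ s - 1) 1
    simpa using this
  have d : C * (‖s-1‖ * ‖s‖^((1:ℝ)/15)) ≤ C * ((3 + |s.im|) * zzW s.im) := by gcongr
  have e : 1 ≤ (3 + |s.im|) * zzW s.im := by
    nlinarith [zzW_one s.im, abs_nonneg s.im]
  linarith

lemma zz_deriv (j : ℕ) : ∃ C : ℝ, 0 < C ∧ ∀ s : ℂ, 1 ≤ s.re → s.re ≤ 2 →
    ‖iteratedDeriv j riemannZeta₁ s‖ ≤ C * ((3 + |s.im|) * zzW s.im) := by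
  obtain ⟨C, hC, h⟩ := zz_upper
  refine ⟨j.factorial * (4 * C) / (1/40)^j, by positivity, fun s h1 h2 => ?_⟩
  have := Complex.norm_iteratedDeriv_le_of_forall_mem_sphere_norm_le (c := s) (R := 1/40) (f := riemannZeta₁)
    (C := C * (4 * ((3 + |s.im|) * zzW s.im))) j (by norm_num) (Differentiable.diffContOnCl (by fun_prop)) ?_
  · refine this.trans (le_of_eq ?_)
    ring
  · intro z hz
    have hz' : ‖z - s‖ = 1/40 := by simpa [dist_eq_norm] using hz
    have r1 := (Complex.abs_re_le_norm (z-s)).trans hz'.le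
    have r2 := (Complex.abs_im_le_norm (z-s)).trans hz'.le
    simp only [Complex.sub_re, Complex.sub_im] at r1 r2
    rw [abs_le] at r1
    have r3 : |z.im| ≤ |s.im| + 1 := by
      have := abs_add_le (z.im - s.im) s.im
      simp at this; linarith
    have r4 : 3 + |z.im| ≤ 2 * (3 + |s.im|) := by linarith [abs_nonneg s.im]
    refine (h z (by linarith) (by linarith)).trans ?_
    have := zzW_le r4
    have p : 0 ≤ zzW z.im := by linarith [zzW_one z.im]
    calc _ ≤ C * ((2 * (3 + |s.im|)) * (2 * zzW s.im)) := by gcongr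
      _ = _ := by ring

lemma zz_341 {x : ℝ} (hx : 0 < x) {y : ℝ} (hy : y ≠ 0) :
    x^3 * ‖(x:ℂ) + Complex.I * y‖^4 * ‖(x:ℂ) + 2 * Complex.I * y‖ ≤
     ‖riemannZeta₁ (1+x)‖^3 * ‖riemannZeta₁ (1+x+Complex.I*y)‖^4 * ‖riemannZeta₁ (1+x+2*Complex.I*y)‖ := by
  have h := DirichletCharacter.norm_LFunction_product_ge_one (N := 1) (1 : DirichletCharacter ℂ 1) hx y
  rw [one_pow, DirichletCharacter.LFunctionTrivChar, DirichletCharacter.LFunction_modOne_eq] at h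
  have n0 : (x:ℂ) ≠ 0 := by exact_mod_cast hx.ne'
  have n1 : (x:ℂ) + Complex.I * y ≠ 0 := fun h => hx.ne' (by simpa using congrArg Complex.re h)
  have n2 : (x:ℂ) + 2 * Complex.I * y ≠ 0 := fun h => hx.ne' (by simpa using congrArg Complex.re h)
  have m0 : (1 + x:ℂ) ≠ 1 := by simpa using n0
  have m1 : (1 + x + Complex.I * y : ℂ) ≠ 1 := by rw [add_assoc]; simpa using n1
  have m2 : (1 + x + 2 * Complex.I * y : ℂ) ≠ 1 := by rw [add_assoc]; simpa using n2
  rw [riemannZeta_eq_inv_sub_mul m0, riemannZeta_eq_inv_sub_mul m1, riemannZeta_eq_inv_sub_mul m2] at h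
  rw [show (1 + x - 1 : ℂ) = x by ring, show (1 + x + Complex.I * y - 1 : ℂ) = x + Complex.I * y by ring,
    show (1 + x + 2 * Complex.I * y - 1 : ℂ) = x + 2 * Complex.I * y by ring] at h
  simp only [norm_mul, norm_pow, norm_inv] at h
  have k0 : ‖(x:ℂ)‖ = x := by simp [hx.le]
  rw [k0] at h
  have k1 : 0 < ‖(x:ℂ) + Complex.I * y‖ := norm_pos_iff.2 n1
  have k2 : 0 < ‖(x:ℂ) + 2 * Complex.I * y‖ := norm_pos_iff.2 n2
  set A := ‖(x:ℂ) + Complex.I * y‖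
  set B := ‖(x:ℂ) + 2 * Complex.I * y‖
  have hp : 0 < x^3 * A^4 * B := by positivity
  have := mul_le_mul_of_nonneg_left h hp.le
  rw [mul_one] at this
  refine this.trans (le_of_eq ?_)
  field_simp

/-- lower bound on F away from line -/
lemma zz_lower1 : ∃ d : ℝ, 0 < d ∧ ∀ x : ℝ, 0 < x → x ≤ 1 → ∀ y : ℝ, 1 ≤ |y| → ∀ b : ℝ, 0 < b →
    b^4 ≤ x * zzW y ^ 5 →
    d * b^3 * (3+|y|) ≤ ‖riemannZeta₁ (1+x+Complex.I*y)‖ * zzW y ^ 4 := by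
  obtain ⟨C, hC, h⟩ := zz_upper
  set K := (C * (3 * zzW 0))^3 * (4 * C) * 4^4 with hK
  have hW0 : 0 < zzW 0 := by linarith [zzW_one 0]
  have hKp : 0 < K := by positivity
  obtain ⟨d, hd, hdK⟩ : ∃ d : ℝ, 0 < d ∧ d^4 * K ≤ 1/4 := by
    refine ⟨min 1 (1/(4*K)), by positivity, ?_⟩
    have : (min 1 (1/(4*K)))^4 ≤ 1/(4*K) := by
      have h1 : min 1 (1/(4*K)) ≤ 1 := min_le_left _ _
      have h0 : 0 ≤ min 1 (1/(4*K)) := by positivity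
      calc (min 1 (1/(4*K)))^4 ≤ (min 1 (1/(4*K)))^1 := pow_le_pow_of_le_one h0 h1 (by norm_num)
        _ ≤ _ := by rw [pow_one]; exact min_le_right _ _
    calc _ ≤ 1/(4*K) * K := by gcongr
      _ = 1/4 := by field_simp
  refine ⟨d, hd, fun x hx hx1 y hy b hb hbx => ?_⟩
  have hy0 : y ≠ 0 := by rintro rfl; simp at hy; linarith
  set T := 3 + |y| with hT
  set w := zzW y with hw
  have hw1 : 1 ≤ w := zzW_one y
  have hTp : 0 < T := by positivity
  have key := zz_341 hx hy0
  have u0 := h (1+x) (by simp; linarith) (by simp; linarith)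
  have u2 := h (1+x+2*Complex.I*y) (by simp; linarith) (by simp; linarith)
  simp at u0 u2
  set Z := ‖riemannZeta₁ (1+x+Complex.I*y)‖ with hZ
  have hZ0 : 0 ≤ Z := norm_nonneg _
  have v1 : |y| ≤ ‖(x:ℂ) + Complex.I * y‖ := by
    have := Complex.abs_im_le_norm ((x:ℂ) + Complex.I * y); simpa using this
  have v2 : 2 * |y| ≤ ‖(x:ℂ) + 2 * Complex.I * y‖ := by
    have := Complex.abs_im_le_norm ((x:ℂ) + 2 * Complex.I * y); simpa [abs_mul] using this
  have v3 : T / 4 ≤ |y| := by rw [hT]; linarith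
  have w2 : zzW (2*y) ≤ 2 * w := zzW_le (by rw [abs_mul]; simp; linarith)
  have u2' : ‖riemannZeta₁ (1+x+2*Complex.I*y)‖ ≤ C * ((2 * T) * (2 * w)) := by
    refine u2.trans ?_
    rw [← abs_two, ← abs_mul, abs_two] 
    have : 0 ≤ zzW (2*y) := by linarith [zzW_one (2*y)]
    have : 3 + |2*y| ≤ 2 * T := by rw [abs_mul]; simp [hT]; linarith
    gcongr
  have step : x^3 * (T/4)^4 * (2 * (T/4)) ≤ (C * (3 * zzW 0))^3 * Z^4 * (C * ((2 * T) * (2 * w))) := by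
    calc _ ≤ x^3 * ‖(x:ℂ) + Complex.I * y‖^4 * ‖(x:ℂ) + 2 * Complex.I * y‖ := by
          gcongr
          · linarith
          · linarith
      _ ≤ _ := key
      _ ≤ _ := by gcongr
  have step2 : x^3 * T^4 ≤ 2 * (K * (Z^4 * w)) := by
    have e1 : x^3 * (T/4)^4 * (2 * (T/4)) = (x^3 * T^4) * (T / (2 * 4^4)) := by ring
    have e2 : (C * (3 * zzW 0))^3 * Z^4 * (C * ((2 * T) * (2 * w))) = (2 * (K * (Z^4 * w))) * (T / (2 * 4^4)) := by
      rw [hK]; ring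
    rw [e1, e2] at step
    exact le_of_mul_le_mul_right step (by positivity)
  have step3 : (d * b^3 * T)^4 ≤ (Z * w^4)^4 := by
    calc (d * b^3 * T)^4 = d^4 * (b^4)^3 * T^4 := by ring
      _ ≤ d^4 * (x * w^5)^3 * T^4 := by gcongr
      _ = d^4 * w^15 * (x^3 * T^4) := by ring
      _ ≤ d^4 * w^15 * (2 * (K * (Z^4 * w))) := by gcongr
      _ = (d^4 * K) * (2 * (Z * w^4)^4) := by ring
      _ ≤ 1/4 * (2 * (Z * w^4)^4) := by gcongr
      _ ≤ _ := by
        have : 0 ≤ (Z * w^4)^4 := by positivity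
        linarith
  exact le_of_pow_le_pow_left₀ (by norm_num) (by positivity) step3

lemma zz_lower : ∃ c : ℝ, 0 < c ∧ ∀ s : ℂ, 1 < s.re → s.re ≤ 2 → 1 ≤ |s.im| →
    c * (3+|s.im|) ≤ ‖riemannZeta₁ s‖ * zzW s.im ^ 4 := by
  obtain ⟨d, hd, h⟩ := zz_lower1
  obtain ⟨C, hC, hD⟩ := zz_deriv 1
  set b := min 1 (d/(2*C)) with hb
  have hb0 : 0 < b := by positivity
  have hb1 : b ≤ 1 := min_le_left _ _
  have hb2 : C * b ≤ d / 2 := by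
    have : b ≤ d/(2*C) := min_le_right _ _
    calc C * b ≤ C * (d/(2*C)) := by gcongr
      _ = _ := by field_simp
  refine ⟨d / 2 * b^3, by positivity, fun s h1 h2 h3 => ?_⟩
  set w := zzW s.im with hw
  have hw1 : 1 ≤ w := zzW_one _
  set T := 3 + |s.im| with hT
  have hTp : 0 < T := by positivity
  have es : s = 1 + ((s.re - 1 : ℝ):ℂ) + Complex.I * (s.im : ℝ) := by
    apply Complex.ext <;> simp
  by_cases hc : b^4 ≤ (s.re - 1) * w^5
  · have := h (s.re - 1) (by linarith) (by linarith) s.im h3 b hb0 hc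
    rw [← es] at this
    refine le_trans ?_ this
    have : 0 ≤ d * b^3 * T := by positivity
    linarith
  · push Not at hc
    set x := b^4 / w^5 with hx
    have hw5 : 0 < w^5 := by positivity
    have hx0 : 0 < x := by positivity
    have hx1 : x ≤ 1 := by
      rw [hx, div_le_one hw5]
      exact (pow_le_one₀ hb0.le hb1).trans (one_le_pow₀ hw1)
    have hsx : s.re - 1 ≤ x := by rw [hx, le_div_iff₀ hw5]; exact hc.le
    have hl := h x hx0 hx1 s.im h3 b hb0 (by rw [hx]; field_simp; rfl)
    set z : ℂ := 1 + (x:ℂ) + Complex.I * (s.im : ℝ) with hz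
    have mv : ‖riemannZeta₁ z - riemannZeta₁ s‖ ≤ C * (T * w) * ‖z - s‖ := by
      have hconv : Convex ℝ {u : ℂ | u.im = s.im ∧ 1 ≤ u.re ∧ u.re ≤ 2} := by
        intro p hp q hq a b' ha hb' hab
        simp only [Set.mem_setOf_eq, Complex.add_im, Complex.add_re, Complex.real_smul, Complex.mul_re, Complex.mul_im, Complex.ofReal_re, Complex.ofReal_im, zero_mul, sub_zero, add_zero] at *
        obtain ⟨p1, p2, p3⟩ := hp
        obtain ⟨q1, q2, q3⟩ := hq
        refine ⟨?_, by nlinarith, by nlinarith⟩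
        rw [p1, q1, ← add_mul, hab, one_mul]
      refine Convex.norm_image_sub_le_of_norm_deriv_le (s := {u : ℂ | u.im = s.im ∧ 1 ≤ u.re ∧ u.re ≤ 2})
        (fun u _ => (differentiable_riemannZeta₁ u)) ?_ hconv ⟨rfl, h1.le, h2⟩ ?_
      · intro u hu
        have := hD u hu.2.1 hu.2.2
        rw [iteratedDeriv_one, hu.1] at this
        exact this
      · refine ⟨by simp [hz], by simp [hz]; linarith, by simp [hz]; linarith⟩
    have nz : ‖z - s‖ ≤ x := by
      have : z - s = ((x - (s.re - 1) : ℝ):ℂ) := by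
        rw [hz]; apply Complex.ext <;> simp
        ring
      rw [this, Complex.norm_real, Real.norm_eq_abs, abs_le]
      constructor <;> linarith
    have tri : ‖riemannZeta₁ z‖ ≤ ‖riemannZeta₁ s‖ + C * (T * w) * x := by
      have := norm_add_le (riemannZeta₁ z - riemannZeta₁ s) (riemannZeta₁ s)
      rw [sub_add_cancel] at this
      have : C * (T * w) * ‖z - s‖ ≤ C * (T * w) * x := by gcongr
      linarith
    have : ‖riemannZeta₁ z‖ * w^4 ≤ (‖riemannZeta₁ s‖ + C * (T * w) * x) * w^4 := by gcongr
    have e : C * (T * w) * x * w^4 = (C * b) * (b^3 * T) := by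
      rw [hx]; field_simp
    have f : (C * b) * (b^3 * T) ≤ d/2 * (b^3 * T) := by gcongr
    linarith

lemma zz_ne {s : ℂ} (hs : 1 ≤ s.re) : riemannZeta₁ s ≠ 0 := by
  by_cases h : s = 1
  · simp [h]
  · have := riemannZeta_ne_zero_of_one_le_re hs
    rw [riemannZeta_eq_inv_sub_mul h] at this
    exact right_ne_zero_of_mul this

lemma zz_ratio (j : ℕ) : ∃ C : ℝ, 0 < C ∧ ∀ s : ℂ, 1 < s.re → s.re ≤ 2 →
    ‖iteratedDeriv j riemannZeta₁ s / riemannZeta₁ s‖ ≤ C * zzW s.im ^ 5 := by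
  obtain ⟨c, hc, h⟩ := zz_lower
  obtain ⟨C, hC, hD⟩ := zz_deriv j
  have hcd : ContDiff ℂ j riemannZeta₁ := Differentiable.contDiff (by fun_prop)
  have hcont : Continuous (iteratedDeriv j riemannZeta₁) := hcd.continuous_iteratedDeriv j (by simp)
  have hco : ContinuousOn (fun s => iteratedDeriv j riemannZeta₁ s / riemannZeta₁ s) (Set.Icc 1 2 ×ℂ Set.Icc (-1) 1) := by
    refine hcont.continuousOn.div (differentiable_riemannZeta₁.continuous.continuousOn) ?_
    intro s hs
    exact zz_ne hs.1.1
  obtain ⟨M, hM⟩ := (isCompact_Icc.reProdIm isCompact_Icc).exists_bound_of_continuousOn hco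
  refine ⟨C / c + |M|, by positivity, fun s h1 h2 => ?_⟩
  have hw1 : 1 ≤ zzW s.im := zzW_one _
  have hw5 : 1 ≤ zzW s.im ^ 5 := one_le_pow₀ hw1
  by_cases ht : 1 ≤ |s.im|
  · have l := h s h1 h2 ht
    have u := hD s h1.le h2
    have hF : 0 < ‖riemannZeta₁ s‖ := norm_pos_iff.2 (zz_ne h1.le)
    rw [norm_div, div_le_iff₀ hF]
    have : C * ((3 + |s.im|) * zzW s.im) ≤ C / c * zzW s.im ^ 5 * ‖riemannZeta₁ s‖ := by
      calc C * ((3 + |s.im|) * zzW s.im) = C / c * zzW s.im * (c * (3 + |s.im|)) := by field_simp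
        _ ≤ C / c * zzW s.im * (‖riemannZeta₁ s‖ * zzW s.im ^ 4) := by gcongr
        _ = _ := by ring
    have : 0 ≤ |M| * zzW s.im ^ 5 * ‖riemannZeta₁ s‖ := by positivity
    nlinarith
  · push Not at ht
    rw [abs_lt] at ht
    have := hM s ⟨⟨h1.le, h2⟩, ht.1.le, ht.2.le⟩
    have h3 : M ≤ |M| := le_abs_self M
    have : 0 ≤ C / c := by positivity
    have : |M| ≤ |M| * zzW s.im ^ 5 := le_mul_of_one_le_right (abs_nonneg _) hw5
    nlinarith

noncomputable def zzE (s : ℂ) : ℂ :=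
  iteratedDeriv 3 riemannZeta₁ s / riemannZeta₁ s
   - 3 * (iteratedDeriv 1 riemannZeta₁ s / riemannZeta₁ s) * (iteratedDeriv 2 riemannZeta₁ s / riemannZeta₁ s)
   + 2 * (iteratedDeriv 1 riemannZeta₁ s / riemannZeta₁ s)^3

lemma zzE_bound : ∃ C : ℝ, 0 < C ∧ ∀ s : ℂ, 1 < s.re → s.re ≤ 2 → ‖zzE s‖ ≤ C * (3 + |s.im|) := by
  obtain ⟨C1, h1, H1⟩ := zz_ratio 1
  obtain ⟨C2, h2, H2⟩ := zz_ratio 2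
  obtain ⟨C3, h3, H3⟩ := zz_ratio 3
  refine ⟨C3 + 3 * C1 * C2 + 2 * C1^3, by positivity, fun s a b => ?_⟩
  have k1 := H1 s a b
  have k2 := H2 s a b
  have k3 := H3 s a b
  rw [← zzW_pow]
  unfold zzE
  set A := iteratedDeriv 1 riemannZeta₁ s / riemannZeta₁ s
  set B := iteratedDeriv 2 riemannZeta₁ s / riemannZeta₁ s
  set D := iteratedDeriv 3 riemannZeta₁ s / riemannZeta₁ s
  set w := zzW s.im
  have hw : 1 ≤ w := zzW_one _
  have t1 : ‖D - 3 * A * B + 2 * A^3‖ ≤ ‖D‖ + 3 * ‖A‖ * ‖B‖ + 2 * ‖A‖^3 := by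
    refine (norm_add_le _ _).trans ?_
    refine (add_le_add (norm_sub_le _ _) le_rfl).trans ?_
    simp
  have t2 : 3 * ‖A‖ * ‖B‖ ≤ 3 * (C1 * w^5) * (C2 * w^5) := by gcongr
  have t3 : 2 * ‖A‖^3 ≤ 2 * (C1 * w^5)^3 := by gcongr
  have w5 : w^5 ≤ w^15 := pow_le_pow_right₀ hw (by norm_num)
  have w10 : w^10 ≤ w^15 := pow_le_pow_right₀ hw (by norm_num)
  calc _ ≤ C3 * w^5 + 3 * (C1 * w^5) * (C2 * w^5) + 2 * (C1 * w^5)^3 := by linarith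
    _ = C3 * w^5 + 3 * C1 * C2 * w^10 + 2 * C1^3 * w^15 := by ring
    _ ≤ C3 * w^15 + 3 * C1 * C2 * w^15 + 2 * C1^3 * w^15 := by gcongr
    _ = _ := by ring

lemma zz_hasDeriv (j : ℕ) (s : ℂ) :
    HasDerivAt (iteratedDeriv j riemannZeta₁) (iteratedDeriv (j+1) riemannZeta₁ s) s := by
  have hcd : ContDiff ℂ (j+1) riemannZeta₁ := Differentiable.contDiff (by fun_prop)
  rw [iteratedDeriv_succ]
  exact ((hcd.differentiable_iteratedDeriv j (by exact_mod_cast Nat.lt_succ_self j)) s).hasDerivAt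

lemma zz_halfplane {s : ℂ} (hs : 1 < s.re) : {z : ℂ | 1 < z.re} ∈ nhds s :=
  (isOpen_lt continuous_const Complex.continuous_re).mem_nhds hs

noncomputable abbrev zzL : ℕ → ℂ := fun n => ((ArithmeticFunction.vonMangoldt n : ℝ) : ℂ)

lemma zzL0 {s : ℂ} (hs : 1 < s.re) :
    LSeries zzL s = (s-1)⁻¹ - iteratedDeriv 1 riemannZeta₁ s / riemannZeta₁ s := by
  have h := ArithmeticFunction.LSeries_vonMangoldt_eq_deriv_riemannZeta_div hs
  have h1 : s ≠ 1 := by rintro rfl; simp at hs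
  have h1' : s - 1 ≠ 0 := sub_ne_zero.2 h1
  have hF := zz_ne hs.le
  have e : riemannZeta =ᶠ[nhds s] fun z => (z-1)⁻¹ * riemannZeta₁ z := by
    filter_upwards [zz_halfplane hs] with z hz
    exact riemannZeta_eq_inv_sub_mul (by rintro rfl; simp at hz)
  have d1 : HasDerivAt (fun z : ℂ => z - 1) 1 s := (hasDerivAt_id s).sub_const 1
  have d2 := (d1.inv h1').mul (differentiable_riemannZeta₁ s).hasDerivAt
  have d3 : deriv riemannZeta s = -1 / (s-1)^2 * riemannZeta₁ s + (s-1)⁻¹ * deriv riemannZeta₁ s := by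
    rw [e.deriv_eq]; exact d2.deriv
  have h' : LSeries zzL s = - deriv riemannZeta s / riemannZeta s := h
  rw [h', d3, riemannZeta_eq_inv_sub_mul h1, iteratedDeriv_one]
  field_simp
  ring

lemma zzL1 {s : ℂ} (hs : 1 < s.re) :
    deriv (LSeries zzL) s = - ((s-1)^2)⁻¹ - (iteratedDeriv 2 riemannZeta₁ s / riemannZeta₁ s
      - (iteratedDeriv 1 riemannZeta₁ s / riemannZeta₁ s)^2) := by
  have h1 : s ≠ 1 := by rintro rfl; simp at hs
  have h1' : s - 1 ≠ 0 := sub_ne_zero.2 h1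
  have hF := zz_ne hs.le
  have e : LSeries zzL =ᶠ[nhds s] fun s => (s-1)⁻¹ - iteratedDeriv 1 riemannZeta₁ s / riemannZeta₁ s := by
    filter_upwards [zz_halfplane hs] with z hz
    exact zzL0 hz
  have d1 : HasDerivAt (fun z : ℂ => z - 1) 1 s := (hasDerivAt_id s).sub_const 1
  have dF : HasDerivAt riemannZeta₁ (iteratedDeriv 1 riemannZeta₁ s) s := by simpa using zz_hasDeriv 0 s
  have d2 := (d1.inv h1').sub ((zz_hasDeriv 1 s).div dF hF)
  rw [e.deriv_eq]
  refine d2.deriv.trans ?_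
  field_simp

lemma zzL2 {s : ℂ} (hs : 1 < s.re) :
    iteratedDeriv 2 (LSeries zzL) s = 2 * ((s-1)^3)⁻¹ - zzE s := by
  have h1 : s ≠ 1 := by rintro rfl; simp at hs
  have h1' : s - 1 ≠ 0 := sub_ne_zero.2 h1
  have hF := zz_ne hs.le
  have e : deriv (LSeries zzL) =ᶠ[nhds s] fun s => - ((s-1)^2)⁻¹ - (iteratedDeriv 2 riemannZeta₁ s / riemannZeta₁ s
      - (iteratedDeriv 1 riemannZeta₁ s / riemannZeta₁ s)^2) := by
    filter_upwards [zz_halfplane hs] with z hz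
    exact zzL1 hz
  have d1 : HasDerivAt (fun z : ℂ => z - 1) 1 s := (hasDerivAt_id s).sub_const 1
  have dF : HasDerivAt riemannZeta₁ (iteratedDeriv 1 riemannZeta₁ s) s := by simpa using zz_hasDeriv 0 s
  have d2 := ((d1.pow 2).inv (pow_ne_zero 2 h1')).neg.sub (((zz_hasDeriv 2 s).div dF hF).sub (((zz_hasDeriv 1 s).div dF hF).pow 2))
  rw [iteratedDeriv_succ, iteratedDeriv_one, e.deriv_eq]
  refine d2.deriv.trans ?_
  unfold zzE
  simp only [Pi.pow_apply, Pi.div_apply, Nat.cast_ofNat, Nat.add_one_sub_one, pow_one, mul_one, Nat.reduceAdd]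
  generalize iteratedDeriv 1 riemannZeta₁ s = D1
  generalize iteratedDeriv 2 riemannZeta₁ s = D2
  generalize iteratedDeriv 3 riemannZeta₁ s = D3
  generalize riemannZeta₁ s = F at *
  generalize s - 1 = u at *
  field_simp
  ring

/-- coefficients Λ(n) log² n n^{-σ} -/
noncomputable def zzc (σ : ℝ) (n : ℕ) : ℝ :=
  ArithmeticFunction.vonMangoldt n * (Real.log n)^2 * (n:ℝ)^(-σ)

lemma zz_absc : LSeries.abscissaOfAbsConv zzL ≤ 1 := by
  refine LSeries.abscissaOfAbsConv_le_of_forall_lt_LSeriesSummable' fun y hy => ?_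
  refine ArithmeticFunction.LSeriesSummable_vonMangoldt ?_
  simpa using (by exact_mod_cast hy : (1:ℝ) < y)

lemma zz_hasSum {s : ℂ} (hs : 1 < s.re) :
    HasSum (fun n : ℕ => (zzc s.re n : ℂ) * Complex.exp (-(s.im * Real.log n) * Complex.I))
      (2 * ((s-1)^3)⁻¹ - zzE s) := by
  have ha : LSeries.abscissaOfAbsConv zzL < s.re :=
    lt_of_le_of_lt zz_absc (by exact_mod_cast hs)
  have h := LSeries_iteratedDeriv 2 ha
  rw [zzL2 hs] at h
  rw [h]
  have hs2 : LSeriesSummable (LSeries.logMul^[2] zzL) s :=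
    LSeriesSummable_of_abscissaOfAbsConv_lt_re (by rw [LSeries.absicssaOfAbsConv_logPowMul]; exact ha)
  have := hs2.LSeriesHasSum
  rw [LSeriesHasSum] at this
  rw [neg_one_sq, one_mul]
  convert this using 1
  funext n
  rcases Nat.eq_zero_or_pos n with rfl | hn
  · simp [zzc]
  rw [LSeries.term_of_ne_zero hn.ne']
  simp only [Function.iterate_succ, Function.iterate_zero, Function.comp, id, LSeries.logMul, zzc, zzL]
  have hn' : (n:ℂ) ≠ 0 := by exact_mod_cast hn.ne'
  have e1 : (((n:ℝ)^(-s.re) : ℝ) : ℂ) * Complex.exp (-(s.im * Real.log n) * Complex.I) = ((n:ℂ)^s)⁻¹ := by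
    rw [← Complex.cpow_neg, Complex.cpow_def_of_ne_zero hn', Real.rpow_def_of_pos (by exact_mod_cast hn),
      Complex.ofReal_exp, ← Complex.exp_add, ← Complex.natCast_log]
    congr 1
    conv_rhs => rw [← Complex.re_add_im s]
    push_cast
    ring
  rw [div_eq_mul_inv, ← e1, ← Complex.natCast_log]
  push_cast
  ring

lemma zz_gint {b : ℝ} (hb : 0 < b) :
    MeasureTheory.IntegrableOn (fun y : ℝ => y^2 * rexp (-(b*y))) (Set.Ioi 0) := by
  have h := integrableOn_rpow_mul_exp_neg_mul_rpow (p := 1) (s := 2) (b := b) (by norm_num) (by norm_num) hb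
  refine h.congr_fun (fun x hx => ?_) measurableSet_Ioi
  simp

lemma zz_gtend {b : ℝ} (hb : 0 < b) (k : ℕ) :
    Tendsto (fun y : ℝ => y^k * rexp (-(b*y))) atTop (nhds 0) := by
  have h := tendsto_rpow_mul_exp_neg_mul_atTop_nhds_zero k b hb
  refine h.congr fun y => ?_
  simp

lemma zz_norm_exp (r : ℂ) (y : ℝ) : ‖Complex.exp (-(r*y))‖ = rexp (-(r.re*y)) := by
  rw [Complex.norm_exp]; simp

lemma zz_cgint {r : ℂ} (hr : 0 < r.re) :
    MeasureTheory.IntegrableOn (fun y : ℝ => (y:ℂ)^2 * Complex.exp (-(r*y))) (Set.Ioi 0) := by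
  refine (zz_gint hr).mono' ?_ ?_
  · apply Continuous.aestronglyMeasurable; fun_prop
  · refine Eventually.of_forall fun y => ?_
    rw [norm_mul, zz_norm_exp]; simp

lemma zz_gamma {r : ℂ} (hr : 0 < r.re) :
    ∫ y in Set.Ioi (0:ℝ), (y:ℂ)^2 * Complex.exp (-(r*y)) = 2 * (r^3)⁻¹ := by
  have hr0 : r ≠ 0 := by rintro rfl; simp at hr
  have hd : ∀ y ∈ Set.Ici (0:ℝ), HasDerivAt (fun y : ℝ => -((y:ℂ)^2/r + 2*y/r^2 + 2/r^3) * Complex.exp (-(r*y)))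
      ((y:ℂ)^2 * Complex.exp (-(r*y))) y := by
    intro y _
    have a0 : HasDerivAt (fun y : ℂ => y) 1 (y:ℂ) := hasDerivAt_id _
    have a1 := (((a0.pow 2).div_const r).add (((a0.const_mul 2)).div_const (r^2))).add_const (2/r^3)
    have a2 := (a0.const_mul r).neg.cexp
    have a3 := (a1.neg.mul a2).comp_ofReal
    refine a3.congr_deriv ?_
    simp
    field_simp
    ring
  have ht : Tendsto (fun y : ℝ => -((y:ℂ)^2/r + 2*y/r^2 + 2/r^3) * Complex.exp (-(r*y))) atTop (nhds 0) := by
    have key : ∀ k : ℕ, Tendsto (fun y : ℝ => (y:ℂ)^k * Complex.exp (-(r*y))) atTop (nhds 0) := by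
      intro k
      rw [tendsto_zero_iff_norm_tendsto_zero]
      have := (zz_gtend hr k).norm
      simp only [norm_zero] at this
      refine this.congr fun y => ?_
      rw [norm_mul, norm_mul, zz_norm_exp]; simp
    have := (((key 2).const_mul (-1/r)).add ((key 1).const_mul (-2/r^2))).add ((key 0).const_mul (-2/r^3))
    simp only [mul_zero, add_zero] at this
    refine this.congr fun y => ?_
    ring
  have := MeasureTheory.integral_Ioi_of_hasDerivAt_of_tendsto' hd (zz_cgint hr) ht
  rw [this]
  simp
  field_simp

lemma zz_summable {σ : ℝ} (hσ : 1 < σ) : Summable (zzc σ) := by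
  have h := (zz_hasSum (s := (σ:ℂ)) (by simpa using hσ)).summable
  simp at h
  exact_mod_cast h

lemma zzc_nonneg (σ : ℝ) (n : ℕ) : 0 ≤ zzc σ n := by
  unfold zzc
  have := ArithmeticFunction.vonMangoldt_nonneg (n := n)
  positivity

noncomputable def zzs (σ h ξ : ℝ) : ℂ := ⟨σ, -(2*π*ξ/h)⟩

lemma zzs_cont (σ h : ℝ) : Continuous (zzs σ h) := by
  have : zzs σ h = fun ξ : ℝ => (σ:ℂ) + ((-(2*π*ξ/h) : ℝ):ℂ) * Complex.I := by
    funext ξ; apply Complex.ext <;> simp [zzs]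
  rw [this]; fun_prop

lemma zzE_cont {σ : ℝ} (hσ : 1 < σ) (h : ℝ) : Continuous (fun ξ => zzE (zzs σ h ξ)) := by
  have hc : ∀ j, Continuous (fun ξ => iteratedDeriv j riemannZeta₁ (zzs σ h ξ)) := fun j =>
    (continuous_iff_continuousAt.2 fun s => (zz_hasDeriv j s).continuousAt).comp (zzs_cont σ h)
  have h0 : Continuous (fun ξ => riemannZeta₁ (zzs σ h ξ)) := by simpa using hc 0
  have hn : ∀ ξ, riemannZeta₁ (zzs σ h ξ) ≠ 0 := fun ξ => zz_ne hσ.le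
  have q := fun j => (hc j).div h0 hn
  unfold zzE
  exact ((q 3).sub ((continuous_const.mul (q 1)).mul (q 2))).add (continuous_const.mul ((q 1).pow 3))

open FourierTransform in
lemma zz_inv (f : SchwartzMap ℝ ℂ) (x : ℝ) :
    f x = ∫ ξ : ℝ, Complex.exp ((2*π*ξ*x : ℝ) * Complex.I) * (𝓕 f : SchwartzMap ℝ ℂ) ξ := by
  have h : f x = 𝓕⁻ ((𝓕 f : SchwartzMap ℝ ℂ) : ℝ → ℂ) x := by
    rw [← SchwartzMap.fourierInv_coe]; simp
  rw [h, Real.fourierInv_eq']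
  congr 1
  funext ξ
  simp only [smul_eq_mul]
  congr 4
  simp [mul_comm, mul_assoc]

/-- pure-sum side -/
lemma zz_sumside (g : ℝ → ℂ) (hg : MeasureTheory.Integrable g) {σ h X : ℝ} (hσ : 1 < σ) :
    HasSum (fun n : ℕ => (zzc σ n : ℂ) * ∫ ξ : ℝ, Complex.exp ((2*π*ξ*((Real.log n - X)/h) : ℝ) * Complex.I) * g ξ)
      (∫ ξ : ℝ, Complex.exp ((2*π*ξ*(-X/h) : ℝ) * Complex.I) * g ξ *
        (2 * ((zzs σ h ξ-1)^3)⁻¹ - zzE (zzs σ h ξ))) := by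
  have hi : ∀ x : ℝ, MeasureTheory.Integrable (fun ξ : ℝ => Complex.exp ((2*π*ξ*x : ℝ) * Complex.I) * g ξ) := by
    intro x
    refine hg.bdd_mul (c := 1) ?_ ?_
    · apply Continuous.aestronglyMeasurable; fun_prop
    · exact Eventually.of_forall fun ξ => by rw [Complex.norm_exp_ofReal_mul_I]
  have key := MeasureTheory.hasSum_integral_of_summable_integral_norm
    (F := fun (n:ℕ) (ξ:ℝ) => (zzc σ n : ℂ) * (Complex.exp ((2*π*ξ*((Real.log n - X)/h) : ℝ) * Complex.I) * g ξ))
    (μ := MeasureTheory.volume) (fun n => (hi _).const_mul _) ?_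
  · convert key using 1
    · rfl
    · funext n
      rw [MeasureTheory.integral_const_mul]
    · congr 1
      funext ξ
      have h1 := (zz_hasSum (s := zzs σ h ξ) hσ).mul_left (Complex.exp ((2*π*ξ*(-X/h) : ℝ) * Complex.I) * g ξ)
      rw [← h1.tsum_eq]
      congr 1
      funext n
      have : Complex.exp ((2*π*ξ*((Real.log n - X)/h) : ℝ) * Complex.I) =
        Complex.exp ((2*π*ξ*(-X/h) : ℝ) * Complex.I) * Complex.exp (-((zzs σ h ξ).im * Real.log n) * Complex.I) := by
        rw [← Complex.exp_add]
        congr 1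
        simp only [zzs]
        push_cast
        ring
      rw [this]
      simp only [zzs]
      ring
  · have : ∀ n : ℕ, (∫ ξ : ℝ, ‖(zzc σ n : ℂ) * (Complex.exp ((2*π*ξ*((Real.log n - X)/h) : ℝ) * Complex.I) * g ξ)‖)
       = zzc σ n * ∫ ξ, ‖g ξ‖ := by
      intro n
      rw [← MeasureTheory.integral_const_mul]
      congr 1
      funext ξ
      rw [norm_mul, norm_mul, Complex.norm_exp_ofReal_mul_I, one_mul, Complex.norm_real,
        Real.norm_of_nonneg (zzc_nonneg _ _)]
    simp only [this]
    exact (zz_summable hσ).mul_right _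

/-- integral side -/
lemma zz_intside (g : ℝ → ℂ) (hg : MeasureTheory.Integrable g) {σ h X : ℝ} (hσ : 1 < σ) :
    ∫ y in Set.Ioi (0:ℝ), ((y^2 * rexp (-((σ-1)*y)) : ℝ) : ℂ) *
      ∫ ξ : ℝ, Complex.exp ((2*π*ξ*((y - X)/h) : ℝ) * Complex.I) * g ξ =
      ∫ ξ : ℝ, Complex.exp ((2*π*ξ*(-X/h) : ℝ) * Complex.I) * g ξ * (2 * ((zzs σ h ξ-1)^3)⁻¹) := by
  have hint : MeasureTheory.Integrable (Function.uncurry fun (y ξ : ℝ) =>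
      ((y^2 * rexp (-((σ-1)*y)) : ℝ) : ℂ) * (Complex.exp ((2*π*ξ*((y - X)/h) : ℝ) * Complex.I) * g ξ))
      ((MeasureTheory.volume.restrict (Set.Ioi (0:ℝ))).prod MeasureTheory.volume) := by
    have h1 : MeasureTheory.Integrable (fun y : ℝ => ((y^2 * rexp (-((σ-1)*y)) : ℝ) : ℂ))
       (MeasureTheory.volume.restrict (Set.Ioi (0:ℝ))) := (zz_gint (sub_pos.2 hσ)).ofReal
    have h2 := h1.mul_prod hg
    have h3 := h2.bdd_mul (f := fun z : ℝ × ℝ => Complex.exp ((2*π*z.2*((z.1 - X)/h) : ℝ) * Complex.I)) (c := 1)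
      (by apply Continuous.aestronglyMeasurable; fun_prop)
      (Eventually.of_forall fun z => by rw [Complex.norm_exp_ofReal_mul_I])
    refine h3.congr (Eventually.of_forall fun z => ?_)
    simp only [Function.uncurry]
    ring
  simp_rw [← MeasureTheory.integral_const_mul]
  rw [MeasureTheory.integral_integral_swap hint]
  congr 1
  funext ξ
  have hr : 0 < (zzs σ h ξ - 1).re := by simp [zzs]; exact hσ
  rw [← zz_gamma hr, ← MeasureTheory.integral_const_mul]
  congr 1
  funext y
  have : Complex.exp (-((zzs σ h ξ - 1) * y)) = (rexp (-((σ-1)*y)) : ℂ) * Complex.exp ((2*π*ξ*(y/h) : ℝ) * Complex.I) := by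
    rw [Complex.ofReal_exp, ← Complex.exp_add]
    congr 1
    apply Complex.ext <;> simp [zzs]
    ring
  have h2 : Complex.exp ((2*π*ξ*((y - X)/h) : ℝ) * Complex.I) =
    Complex.exp ((2*π*ξ*(-X/h) : ℝ) * Complex.I) * Complex.exp ((2*π*ξ*(y/h) : ℝ) * Complex.I) := by
    rw [← Complex.exp_add]
    congr 1
    push_cast
    ring
  rw [this, h2]
  push_cast
  ring

open FourierTransform in
lemma zz_main (f : SchwartzMap ℝ ℂ) : ∃ C : ℝ, 0 < C ∧ ∀ σ h X : ℝ, 1 < σ → σ ≤ 2 → 0 < h →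
    ‖(∑' n : ℕ, (zzc σ n : ℂ) * f ((Real.log n - X)/h)) -
      ∫ y in Set.Ioi (0:ℝ), ((y^2 * rexp (-((σ-1)*y)) : ℝ) : ℂ) * f ((y - X)/h)‖ ≤ C * (1 + 1/h) := by
  obtain ⟨C, hC, HC⟩ := zzE_bound
  set g : ℝ → ℂ := fun ξ => (𝓕 f : SchwartzMap ℝ ℂ) ξ with hgdef
  have hg : MeasureTheory.Integrable g := (𝓕 f : SchwartzMap ℝ ℂ).integrable
  have hgc : Continuous g := (𝓕 f : SchwartzMap ℝ ℂ).continuous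
  have hg1 : MeasureTheory.Integrable (fun ξ => |ξ| * ‖g ξ‖) := by
    simpa using (𝓕 f : SchwartzMap ℝ ℂ).integrable_pow_mul MeasureTheory.volume 1
  set A := ∫ ξ, ‖g ξ‖ with hA
  set B := ∫ ξ, |ξ| * ‖g ξ‖ with hB
  have hA0 : 0 ≤ A := MeasureTheory.integral_nonneg fun _ => norm_nonneg _
  have hB0 : 0 ≤ B := MeasureTheory.integral_nonneg fun _ => by positivity
  refine ⟨C * (3 * A + 2 * π * B) + 1, by positivity, fun σ h X h1 h2 hh => ?_⟩
  have hs := (zz_sumside g hg (h := h) (X := X) h1).tsum_eq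
  have hi := zz_intside g hg (h := h) (X := X) h1
  have e1 : ∀ x, f x = ∫ ξ : ℝ, Complex.exp ((2*π*ξ*x : ℝ) * Complex.I) * g ξ := zz_inv f
  simp only [← e1] at hs hi
  rw [hs, hi]
  set ph : ℝ → ℂ := fun ξ => Complex.exp ((2*π*ξ*(-X/h) : ℝ) * Complex.I) with hph
  have hphn : ∀ ξ, ‖ph ξ‖ = 1 := fun ξ => Complex.norm_exp_ofReal_mul_I _
  have hphc : Continuous ph := by rw [hph]; fun_prop
  have hEb : ∀ ξ, ‖ph ξ * g ξ * zzE (zzs σ h ξ)‖ ≤ C * (3 * ‖g ξ‖ + 2*π/h * (|ξ| * ‖g ξ‖)) := by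
    intro ξ
    have := HC (zzs σ h ξ) h1 h2
    rw [norm_mul, norm_mul, hphn, one_mul]
    have e : |(zzs σ h ξ).im| = 2*π/h*|ξ| := by
      simp only [zzs]
      rw [abs_neg, abs_div, abs_mul, abs_of_pos hh, abs_of_pos (by positivity : 0 < 2 * π)]
      ring
    rw [e] at this
    calc _ ≤ ‖g ξ‖ * (C * (3 + 2*π/h*|ξ|)) := by gcongr
      _ = _ := by ring
  have hbint : MeasureTheory.Integrable (fun ξ => C * (3 * ‖g ξ‖ + 2*π/h * (|ξ| * ‖g ξ‖))) :=
    ((hg.norm.const_mul 3).add (hg1.const_mul _)).const_mul _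
  have hE : MeasureTheory.Integrable (fun ξ => ph ξ * g ξ * zzE (zzs σ h ξ)) :=
    hbint.mono' ((hphc.mul hgc).mul (zzE_cont h1 h)).aestronglyMeasurable (Eventually.of_forall hEb)
  have hG : MeasureTheory.Integrable (fun ξ => ph ξ * g ξ * (2 * ((zzs σ h ξ-1)^3)⁻¹)) := by
    have hre : ∀ ξ, (zzs σ h ξ - 1).re = σ - 1 := fun ξ => by simp [zzs]
    have hne : ∀ ξ, zzs σ h ξ - 1 ≠ 0 := fun ξ hz => by
      have := hre ξ; rw [hz] at this; simp at this; linarith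
    have hcc : Continuous (fun ξ => 2 * ((zzs σ h ξ-1)^3)⁻¹) :=
      continuous_const.mul ((((zzs_cont σ h).sub continuous_const).pow 3).inv₀ fun ξ => pow_ne_zero _ (hne ξ))
    refine (hg.norm.mul_const (2 * ((σ-1)^3)⁻¹)).mono' ((hphc.mul hgc).mul hcc).aestronglyMeasurable
      (Eventually.of_forall fun ξ => ?_)
    rw [norm_mul, norm_mul, hphn, one_mul, norm_mul, norm_inv, norm_pow]
    have : σ - 1 ≤ ‖zzs σ h ξ - 1‖ := by
      rw [← hre ξ]; exact Complex.re_le_norm _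
    have h0 : 0 < σ - 1 := by linarith
    have : ((‖zzs σ h ξ - 1‖)^3)⁻¹ ≤ ((σ-1)^3)⁻¹ := by gcongr
    simp only [Complex.norm_ofNat]
    gcongr
  have e2 : (∫ ξ, ph ξ * g ξ * (2 * ((zzs σ h ξ-1)^3)⁻¹ - zzE (zzs σ h ξ))) -
      ∫ ξ, ph ξ * g ξ * (2 * ((zzs σ h ξ-1)^3)⁻¹) = - ∫ ξ, ph ξ * g ξ * zzE (zzs σ h ξ) := by
    simp_rw [mul_sub]
    rw [MeasureTheory.integral_sub hG hE]
    ring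
  rw [e2, norm_neg]
  refine (MeasureTheory.norm_integral_le_of_norm_le hbint (Eventually.of_forall hEb)).trans ?_
  rw [MeasureTheory.integral_const_mul, MeasureTheory.integral_add (hg.norm.const_mul 3) (hg1.const_mul _),
    MeasureTheory.integral_const_mul, MeasureTheory.integral_const_mul, ← hA, ← hB]
  have : 0 < 1/h := by positivity
  have e3 : 2*π/h*B = 2*π*B*(1/h) := by ring
  rw [e3]
  have t1 : 0 ≤ C * (2*π*B) := by positivity
  have t2 : 0 ≤ C * (3*A) * (1/h) := by positivity
  nlinarith

lemma zz_phi : ∃ φ : ℝ → ℝ, (∀ x, 0 ≤ φ x) ∧ (∀ x, φ x ≤ 1) ∧ (∀ x, |x| ≤ 1/4 → φ x = 1) ∧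
    (∀ x, 1/2 ≤ |x| → φ x = 0) ∧ Continuous φ ∧ ∃ C : ℝ, 0 < C ∧ ∀ σ h X : ℝ, 1 < σ → σ ≤ 2 → 0 < h →
    |(∑' n : ℕ, zzc σ n * φ ((Real.log n - X)/h)) -
      ∫ y in Set.Ioi (0:ℝ), (y^2 * rexp (-((σ-1)*y))) * φ ((y - X)/h)| ≤ C * (1 + 1/h) := by
  let b : ContDiffBump (0:ℝ) := ⟨1/4, 1/2, by norm_num, by norm_num⟩
  have hcd : ContDiff ℝ (↑(⊤:ℕ∞)) (fun x => ((b x : ℝ) : ℂ)) :=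
    Complex.ofRealCLM.contDiff.comp b.contDiff
  have hcs : HasCompactSupport (fun x => ((b x : ℝ) : ℂ)) :=
    b.hasCompactSupport.comp_left (g := fun x : ℝ => (x:ℂ)) (by simp)
  obtain ⟨C, hC, H⟩ := zz_main (hcs.toSchwartzMap hcd)
  refine ⟨b, fun x => b.nonneg, fun x => b.le_one, fun x hx => ?_, fun x hx => ?_, b.continuous, C, hC, ?_⟩
  · apply b.one_of_mem_closedBall
    simpa [b] using hx
  · apply b.zero_of_le_dist
    simpa [b] using hx
  · intro σ h X h1 h2 hh
    have := H σ h X h1 h2 hh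
    have e : ∀ x, (hcs.toSchwartzMap hcd) x = ((b x : ℝ):ℂ) := fun x => rfl
    simp only [e, ← Complex.ofReal_mul] at this
    rw [← Complex.ofReal_tsum, integral_complex_ofReal, ← Complex.ofReal_sub, Complex.norm_real] at this
    exact this

lemma zz_Iint {φ : ℝ → ℝ} (p0 : ∀ x, 0 ≤ φ x) (p1 : ∀ x, φ x ≤ 1) (hc : Continuous φ)
    {σ X h : ℝ} (hσ : 1 < σ) :
    MeasureTheory.IntegrableOn (fun y : ℝ => (y^2 * rexp (-((σ-1)*y))) * φ ((y - X)/h)) (Set.Ioi 0) := by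
  refine (zz_gint (sub_pos.2 hσ)).mono' ?_ ?_
  · apply Continuous.aestronglyMeasurable; fun_prop
  · refine Eventually.of_forall fun y => ?_
    rw [Real.norm_of_nonneg (mul_nonneg (by positivity) (p0 _))]
    exact mul_le_of_le_one_right (by positivity) (p1 _)

lemma zz_Iup {φ : ℝ → ℝ} (p0 : ∀ x, 0 ≤ φ x) (p1 : ∀ x, φ x ≤ 1) (p3 : ∀ x, 1/2 ≤ |x| → φ x = 0)
    {σ X h : ℝ} (hσ : 1 < σ) (hh : 0 < h) (hX : h < X) :
    ∫ y in Set.Ioi (0:ℝ), (y^2 * rexp (-((σ-1)*y))) * φ ((y - X)/(2*h)) ≤ 8 * X^2 * h := by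
  have hsub : Set.Ioi (0:ℝ) ∩ Set.Icc (X-h) (X+h) = Set.Icc (X-h) (X+h) := by
    apply Set.inter_eq_right.2
    intro y hy
    have := hy.1
    simp only [Set.mem_Ioi]; linarith
  have hfin : MeasureTheory.Integrable (Set.indicator (Set.Icc (X-h) (X+h)) (fun _ => 4*X^2))
      (MeasureTheory.volume.restrict (Set.Ioi (0:ℝ))) := by
    apply MeasureTheory.Integrable.restrict
    rw [MeasureTheory.integrable_indicator_iff measurableSet_Icc]
    exact (continuous_const.integrableOn_Icc)
  calc _ ≤ ∫ y in Set.Ioi (0:ℝ), Set.indicator (Set.Icc (X-h) (X+h)) (fun _ => 4*X^2) y := by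
        refine MeasureTheory.integral_mono_of_nonneg ?_ hfin ?_
        · exact Eventually.of_forall fun y => mul_nonneg (by positivity) (p0 _)
        · filter_upwards [MeasureTheory.ae_restrict_mem measurableSet_Ioi] with y hy
          have hy : 0 < y := hy
          by_cases hm : y ∈ Set.Icc (X-h) (X+h)
          · rw [Set.indicator_of_mem hm]
            have h1 : y^2 ≤ (2*X)^2 := by
              have := hm.2
              gcongr
              linarith
            have h2 : rexp (-((σ-1)*y)) ≤ 1 := by
              rw [Real.exp_le_one_iff]
              have : 0 < (σ-1)*y := mul_pos (by linarith) hy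
              linarith
            calc _ ≤ y^2 * 1 * 1 := by gcongr <;> first | exact p0 _ | exact p1 _
              _ ≤ _ := by linarith
          · rw [Set.indicator_of_notMem hm, p3, mul_zero]
            rw [abs_div, abs_of_pos (by positivity : 0 < 2*h), le_div_iff₀ (by positivity)]
            by_contra hcon
            push Not at hcon
            apply hm
            have := abs_lt.1 hcon
            constructor <;> linarith [this.1, this.2]
    _ = ∫ y in Set.Icc (X-h) (X+h), 4*X^2 := by
        rw [MeasureTheory.setIntegral_indicator measurableSet_Icc, hsub]
    _ = 8 * X^2 * h := by
        rw [MeasureTheory.setIntegral_const]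
        simp only [Real.volume_real_Icc_of_le (by linarith : X - h ≤ X + h), smul_eq_mul]
        ring

lemma zz_Ilow {φ : ℝ → ℝ} (p0 : ∀ x, 0 ≤ φ x) (p1 : ∀ x, φ x ≤ 1) (p2 : ∀ x, |x| ≤ 1/4 → φ x = 1)
    (hc : Continuous φ) {X h : ℝ} (hh : 0 < h) (hX : h < X) :
    rexp (-2) / 8 * X^2 * h ≤
    ∫ y in Set.Ioi (0:ℝ), (y^2 * rexp (-((1 + 1/X -1)*y))) * φ ((y - X)/h) := by
  have hX0 : 0 < X := by linarith
  have hσ : 1 < 1 + 1/X := by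
    have : 0 < 1/X := by positivity
    linarith
  have hi := zz_Iint p0 p1 hc (X := X) (h := h) hσ
  have hsub : Set.Icc (X-h/4) (X+h/4) ⊆ Set.Ioi (0:ℝ) := by
    intro y hy
    have := hy.1
    simp only [Set.mem_Ioi]; linarith
  calc _ = ∫ y in Set.Icc (X-h/4) (X+h/4), rexp (-2) / 4 * X^2 := by
        rw [MeasureTheory.setIntegral_const]
        simp only [Real.volume_real_Icc_of_le (by linarith : X - h/4 ≤ X + h/4), smul_eq_mul]
        ring
    _ ≤ ∫ y in Set.Icc (X-h/4) (X+h/4), (y^2 * rexp (-((1 + 1/X -1)*y))) * φ ((y - X)/h) := by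
        refine MeasureTheory.setIntegral_mono_on continuous_const.integrableOn_Icc (hi.mono_set hsub) measurableSet_Icc ?_
        intro y hy
        have h1 := hy.1
        have h2 := hy.2
        rw [p2, mul_one]
        · have a1 : (X/2)^2 ≤ y^2 := by gcongr; linarith
          have a2 : rexp (-2) ≤ rexp (-((1 + 1/X -1)*y)) := by
            apply Real.exp_le_exp.2
            have : (1 + 1/X -1)*y = y / X := by ring
            rw [this]
            have : y / X ≤ 2 := by rw [div_le_iff₀ hX0]; linarith
            linarith
          calc _ = (X/2)^2 * rexp (-2) := by ring
            _ ≤ _ := by gcongr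
        · rw [abs_div, abs_of_pos hh, div_le_iff₀ hh, abs_le]
          constructor <;> linarith
    _ ≤ _ := by
        refine MeasureTheory.setIntegral_mono_set hi ?_ hsub.eventuallyLE
        exact Eventually.of_forall fun y => mul_nonneg (by positivity) (p0 _)

noncomputable def zzB (Y h : ℝ) : Finset ℕ :=
  (Finset.range (⌊rexp (Y+h)⌋₊ + 1)).filter (fun p : ℕ => p.Prime ∧ rexp Y < (p : ℝ) ∧ (p : ℝ) ≤ rexp (Y+h))

noncomputable def zzD (Y h : ℝ) : Finset ℕ :=
  (Finset.range (⌊rexp (Y+h)⌋₊ + 1)).filter (fun p : ℕ => rexp Y < (p : ℝ) ∧ (p : ℝ) ≤ rexp (Y+h))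

lemma zz_logb {Y h : ℝ} {n : ℕ} (h1 : rexp Y < (n:ℝ)) (h2 : (n : ℝ) ≤ rexp (Y+h)) :
    0 < (n:ℝ) ∧ Y < Real.log n ∧ Real.log n ≤ Y + h := by
  have h0 : 0 < (n:ℝ) := (Real.exp_pos _).trans h1
  exact ⟨h0, (Real.lt_log_iff_exp_lt h0).2 h1, (Real.log_le_iff_le_exp h0).2 h2⟩

lemma zz_pw {X : ℝ} (hX : 0 < X) {x : ℝ} (hx : 0 < x) :
    x^(-(1+1/X)) = 1/x * rexp (-(Real.log x / X)) := by
  rw [neg_add, Real.rpow_add hx, Real.rpow_neg_one, one_div x, Real.rpow_def_of_pos hx,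
    show Real.log x * -(1/X) = -(Real.log x / X) by ring]

/-- upper estimate -/
lemma zz_Sup {φ : ℝ → ℝ} (p0 : ∀ x, 0 ≤ φ x) (p1 : ∀ x, φ x ≤ 1) (p2 : ∀ x, |x| ≤ 1/4 → φ x = 1)
    {Y h : ℝ} (hh : 0 < h) (hY : h ≤ Y) :
    (∑ p ∈ zzB Y h, (1:ℝ)/p) * (rexp (-2) / 8 * (Y+h/2)^3) ≤
      ∑' n : ℕ, zzc (1+1/(Y+h/2)) n * φ ((Real.log n - (Y+h/2))/(2*h)) := by
  set X := Y + h/2 with hXd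
  have hX0 : 0 < X := by linarith
  have hσ : 1 < 1 + 1/X := by
    have : 0 < 1/X := by positivity
    linarith
  have hsum : Summable (fun n : ℕ => zzc (1+1/X) n * φ ((Real.log n - X)/(2*h))) :=
    Summable.of_nonneg_of_le (fun n => mul_nonneg (zzc_nonneg _ _) (p0 _))
      (fun n => mul_le_of_le_one_right (zzc_nonneg _ _) (p1 _)) (zz_summable hσ)
  refine le_trans ?_ (hsum.sum_le_tsum (zzB Y h) fun n _ => mul_nonneg (zzc_nonneg _ _) (p0 _))
  rw [Finset.sum_mul]
  refine Finset.sum_le_sum fun p hp => ?_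
  simp only [zzB, Finset.mem_filter] at hp
  obtain ⟨-, hpp, h1, h2⟩ := hp
  obtain ⟨hp0, hl1, hl2⟩ := zz_logb h1 h2
  rw [p2, mul_one]
  · unfold zzc
    rw [ArithmeticFunction.vonMangoldt_apply_prime hpp, zz_pw hX0 hp0]
    have a1 : (X/2)^3 ≤ (Real.log p)^3 := by gcongr; linarith
    have a2 : rexp (-2) ≤ rexp (-(Real.log p / X)) := by
      apply Real.exp_le_exp.2
      have : Real.log p / X ≤ 2 := by rw [div_le_iff₀ hX0]; linarith
      linarith
    have hl : 0 < Real.log p := by linarith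
    calc _ = (X/2)^3 * (1/p * rexp (-2)) := by ring
      _ ≤ (Real.log p)^3 * (1/p * rexp (-(Real.log p / X))) := by gcongr
      _ = _ := by ring
  · rw [abs_div, abs_of_pos (by positivity : 0 < 2*h), div_le_iff₀ (by positivity), abs_le]
    constructor <;> linarith

/-- lower estimate -/
lemma zz_Slow {φ : ℝ → ℝ} (p0 : ∀ x, 0 ≤ φ x) (p1 : ∀ x, φ x ≤ 1) (p3 : ∀ x, 1/2 ≤ |x| → φ x = 0)
    {C₂ : ℝ} (hC₂ : ∀ x : ℝ, Chebyshev.psi x - Chebyshev.theta x ≤ C₂ * √x)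
    {Y h : ℝ} (hh : 0 < h) (hY : h ≤ Y) :
    ∑' n : ℕ, zzc (1+1/(Y+h/2)) n * φ ((Real.log n - (Y+h/2))/h) ≤
      8 * (Y+h/2)^3 * (∑ p ∈ zzB Y h, (1:ℝ)/p) + 4 * (Y+h/2)^2 * (C₂ * rexp (-Y/2 + h/2)) := by
  set X := Y + h/2 with hXd
  have hX0 : 0 < X := by linarith
  have hle : ∀ n : ℕ, 0 < (n:ℝ) → Y < Real.log n → (n:ℝ)^(-(1+1/X)) ≤ 1/n := by
    intro n hn hl
    rw [zz_pw hX0 hn]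
    refine mul_le_of_le_one_right (by positivity) ?_
    rw [Real.exp_le_one_iff]
    have : 0 < Real.log n / X := div_pos (by linarith) hX0
    linarith
  rw [tsum_eq_sum (s := zzD Y h)]
  · rw [← Finset.sum_filter_add_sum_filter_not (zzD Y h) Nat.Prime]
    have hB : (zzD Y h).filter Nat.Prime = zzB Y h := by
      unfold zzD zzB
      rw [Finset.filter_filter]
      congr 1
      funext p
      exact propext (by tauto)
    rw [hB]
    refine add_le_add ?_ ?_
    · rw [Finset.mul_sum]
      refine Finset.sum_le_sum fun p hp => ?_
      simp only [zzB, Finset.mem_filter] at hp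
      obtain ⟨-, hpp, h1, h2⟩ := hp
      obtain ⟨hp0, hl1, hl2⟩ := zz_logb h1 h2
      refine (mul_le_of_le_one_right (zzc_nonneg _ _) (p1 _)).trans ?_
      unfold zzc
      rw [ArithmeticFunction.vonMangoldt_apply_prime hpp]
      have hl : 0 < Real.log p := by linarith
      have a1 : (Real.log p)^3 ≤ (2*X)^3 := by gcongr; linarith
      calc _ = (Real.log p)^3 * (p:ℝ)^(-(1+1/X)) := by ring
        _ ≤ (2*X)^3 * (1/p) := by
          gcongr
          exact hle p hp0 hl1
        _ = _ := by ring
    · have hsq : √(rexp (Y+h)) = rexp ((Y+h)/2) := by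
        rw [Real.sqrt_eq_iff_mul_self_eq (Real.exp_pos _).le (Real.exp_pos _).le, ← Real.exp_add]
        congr 1; ring
      have hps := hC₂ (rexp (Y+h))
      rw [Chebyshev.psi_sub_theta_eq_sum_not_prime, hsq] at hps
      calc _ ≤ ∑ n ∈ (zzD Y h).filter (fun n => ¬ n.Prime), 4 * X^2 * rexp (-Y) * ArithmeticFunction.vonMangoldt n := by
            refine Finset.sum_le_sum fun p hp => ?_
            simp only [zzD, Finset.mem_filter] at hp
            obtain ⟨⟨-, h1, h2⟩, -⟩ := hp
            obtain ⟨hp0, hl1, hl2⟩ := zz_logb h1 h2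
            refine (mul_le_of_le_one_right (zzc_nonneg _ _) (p1 _)).trans ?_
            unfold zzc
            have hl : 0 < Real.log p := by linarith
            have a1 : (Real.log p)^2 ≤ (2*X)^2 := by gcongr; linarith
            have a2 : (p:ℝ)^(-(1+1/X)) ≤ rexp (-Y) := by
              refine (hle p hp0 hl1).trans ?_
              rw [Real.exp_neg, one_div]
              gcongr
            have a3 := ArithmeticFunction.vonMangoldt_nonneg (n := p)
            calc _ ≤ ArithmeticFunction.vonMangoldt p * (2*X)^2 * rexp (-Y) := by gcongr
              _ = _ := by ring
        _ = 4 * X^2 * rexp (-Y) * ∑ n ∈ (zzD Y h).filter (fun n => ¬ n.Prime), ArithmeticFunction.vonMangoldt n := by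
            rw [Finset.mul_sum]
        _ ≤ 4 * X^2 * rexp (-Y) * ∑ n ∈ (Finset.Ioc 0 ⌊rexp (Y+h)⌋₊).filter (fun n => ¬ n.Prime), ArithmeticFunction.vonMangoldt n := by
            refine mul_le_mul_of_nonneg_left ?_ (by positivity)
            refine Finset.sum_le_sum_of_subset_of_nonneg ?_ fun n _ _ => ArithmeticFunction.vonMangoldt_nonneg
            intro n hn
            simp only [zzD, Finset.mem_filter, Finset.mem_range, Finset.mem_Ioc] at hn ⊢
            obtain ⟨⟨h0, h1, h2⟩, h3⟩ := hn
            have := (zz_logb h1 h2).1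
            exact ⟨⟨by exact_mod_cast this, by omega⟩, h3⟩
        _ ≤ 4 * X^2 * rexp (-Y) * (C₂ * rexp ((Y+h)/2)) := by gcongr
        _ = 4 * X^2 * (C₂ * (rexp (-Y) * rexp ((Y+h)/2))) := by ring
        _ = _ := by
            rw [← Real.exp_add]
            ring_nf
  · intro n hn
    rcases Nat.eq_zero_or_pos n with rfl | hn0
    · simp [zzc]
    have hn0' : 0 < (n:ℝ) := by exact_mod_cast hn0
    rw [p3, mul_zero]
    rw [abs_div, abs_of_pos hh, le_div_iff₀ hh]
    by_contra hcon
    push Not at hcon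
    have := abs_lt.1 hcon
    apply hn
    have q1 : rexp Y < n := (Real.lt_log_iff_exp_lt hn0').1 (by linarith [this.1])
    have q2 : (n:ℝ) ≤ rexp (Y+h) := (Real.log_le_iff_le_exp hn0').1 (by linarith [this.2])
    simp only [zzD, Finset.mem_filter, Finset.mem_range]
    exact ⟨Nat.lt_succ_of_le (Nat.le_floor q2), q1, q2⟩

lemma zz_final (H : ℝ) (hH : 0 < H) : ∃ K c₁ c₂ : ℝ, 0 < K ∧ 0 < c₁ ∧ 0 < c₂ ∧ ∀ Y h : ℝ, 0 < h → h ≤ H → K ≤ Y → K ≤ Y * h →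
    c₁ * (h / Y) ≤ (∑ p ∈ zzB Y h, (1:ℝ)/p) ∧ (∑ p ∈ zzB Y h, (1:ℝ)/p) ≤ c₂ * (h/Y) := by
  obtain ⟨φ, p0, p1, p2, p3, hc, C, hC, Hm⟩ := zz_phi
  obtain ⟨C₂', hC₂'⟩ := Chebyshev.psi_sub_theta_le_mul_sqrt
  obtain ⟨C₂, hC₂p, hC₂⟩ : ∃ C₂ : ℝ, 0 < C₂ ∧ ∀ x : ℝ, Chebyshev.psi x - Chebyshev.theta x ≤ C₂ * √x :=
    ⟨|C₂'| + 1, by positivity, fun x => (hC₂' x).trans (by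
      gcongr
      linarith [le_abs_self C₂'])⟩
  set e := rexp (-2) with he
  have he0 : 0 < e := Real.exp_pos _
  have he1 : e ≤ 1 := Real.exp_le_one_iff.2 (by norm_num)
  refine ⟨1 + H + 32/e*C*(H+1) + 1024/e*rexp (H/2)*C₂, e/256, 72/e, by positivity, by positivity, by positivity, ?_⟩
  intro Y h hh hhH hKY hKh
  set K := 1 + H + 32/e*C*(H+1) + 1024/e*rexp (H/2)*C₂ with hK
  have z1 : 0 < 32/e*C*(H+1) := by positivity
  have z2 : 0 < 1024/e*rexp (H/2)*C₂ := by positivity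
  have hK1 : 1 ≤ K := by linarith
  have hhY : h ≤ Y := by linarith
  have hY0 : 0 < Y := by linarith
  set X := Y + h/2 with hX
  have hX0 : 0 < X := by linarith
  have hYX : Y ≤ X := by linarith
  have hX2 : X ≤ 2*Y := by linarith
  have hσ1 : 1 < 1 + 1/X := by
    have : 0 < 1/X := by positivity
    linarith
  have hσ2 : 1 + 1/X ≤ 2 := by
    have : 1/X ≤ 1 := by rw [div_le_one hX0]; linarith
    linarith
  have err : C * (1 + 1/h) ≤ e/32 * X^2 * h := by
    have a : 32/e*C*(H+1) ≤ (Y*h)^2 := by nlinarith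
    have b : C * (h+1) ≤ e/32*(Y*h)^2 := by
      calc C * (h+1) ≤ C * (H+1) := by gcongr
        _ = e/32 * (32/e*C*(H+1)) := by field_simp
        _ ≤ _ := by gcongr
    have c : C * (1+1/h) = C * (h+1) / h := by field_simp
    rw [c, div_le_iff₀ hh]
    calc _ ≤ e/32*(Y*h)^2 := b
      _ ≤ e/32*(X*h)^2 := by gcongr
      _ = _ := by ring
  constructor
  · have m := (abs_le.1 (Hm (1+1/X) h X hσ1 hσ2 hh)).1
    have il := zz_Ilow p0 p1 p2 hc hh (by linarith : h < X)
    have su := zz_Slow p0 p1 p3 hC₂ hh hhY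
    rw [← hX] at su
    set S := ∑ p ∈ zzB Y h, (1:ℝ)/p
    have r : 4 * (C₂ * rexp (-Y/2+h/2)) ≤ e/32*h := by
      have a : Y^2/8 ≤ rexp (Y/2) := by
        have := Real.quadratic_le_exp_of_nonneg (by positivity : 0 ≤ Y/2)
        nlinarith
      have b : rexp (-Y/2+h/2) = rexp (h/2) / rexp (Y/2) := by
        rw [← Real.exp_sub]; congr 1; ring
      have c : rexp (h/2) ≤ rexp (H/2) := by gcongr
      have d : 1024/e*rexp (H/2)*C₂ ≤ Y := by linarith
      have f : 1 ≤ Y * h := by linarith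
      have g : rexp (-Y/2+h/2) ≤ rexp (H/2) / (Y^2/8) := by
        rw [b]; gcongr
      calc 4 * (C₂ * rexp (-Y/2+h/2)) ≤ 4 * (C₂ * (rexp (H/2) / (Y^2/8))) := by gcongr
        _ = e/32 * (1024/e*rexp (H/2)*C₂) / Y^2 := by field_simp; norm_num
        _ ≤ e/32 * Y / Y^2 := by gcongr
        _ = e/32 * (1/Y) := by field_simp
        _ ≤ e/32 * h := by
          gcongr
          rw [div_le_iff₀ hY0]; linarith
    have r2 : 4 * X^2 * (C₂ * rexp (-Y/2+h/2)) ≤ X^2 * (e/32*h) := by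
      calc _ = X^2 * (4 * (C₂ * rexp (-Y/2+h/2))) := by ring
        _ ≤ _ := by gcongr
    have t : e/16 * X^2 * h ≤ 8 * X^3 * S := by linarith
    have t2 : e/128*(h/X) ≤ S := by
      have : e/128*(h/X) = (e/16*X^2*h)/(8*X^3) := by field_simp; norm_num
      rw [this, div_le_iff₀ (by positivity)]
      linarith
    refine le_trans ?_ t2
    have : h/(2*Y) ≤ h/X := by gcongr
    calc e/256*(h/Y) = e/128*(h/(2*Y)) := by field_simp; norm_num
      _ ≤ _ := by gcongr
  · have m := (abs_le.1 (Hm (1+1/X) (2*h) X hσ1 hσ2 (by linarith))).2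
    have iu := zz_Iup p0 p1 p3 hσ1 hh (by linarith : h < X)
    have su := zz_Sup p0 p1 p2 hh hhY
    rw [← hX] at su
    set S := ∑ p ∈ zzB Y h, (1:ℝ)/p
    have err2 : C * (1+1/(2*h)) ≤ X^2 * h := by
      have : 1/(2*h) ≤ 1/h := by gcongr; linarith
      calc _ ≤ C * (1+1/h) := by gcongr
        _ ≤ e/32 * X^2 * h := err
        _ ≤ 1 * X^2*h := by gcongr; linarith
        _ = _ := by ring
    have t : S * (e/8*X^3) ≤ 9*X^2*h := by linarith
    have t2 : S ≤ 72/e*(h/X) := by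
      have : 72/e*(h/X) = (9*X^2*h)/(e/8*X^3) := by field_simp; norm_num
      rw [this, le_div_iff₀ (by positivity)]
      exact t
    refine t2.trans ?_
    gcongr

theorem stmt1
    (ε : ℕ → ℝ) (hε : ∀ n, ε n ∈ Set.Ioo (0:ℝ) 1)
    (hε0 : Tendsto ε atTop (nhds 0))
    (hnε : Tendsto (fun n : ℕ => (n : ℝ) * ε n) atTop atTop)
    (a t₀ : ℝ) (ht₀ : 0 < t₀) :
    ∃ c₁ c₂ : ℝ, 0 < c₁ ∧ c₁ ≤ c₂ ∧ ∃ N : ℕ, ∀ n ≥ N,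
      c₁ * ε n / n ≤
        (∑ p ∈ (Finset.range (⌊Real.exp (((n : ℝ) + a + ε n) / t₀)⌋₊ + 1)).filter
            (fun p : ℕ => p.Prime ∧ Real.exp (((n : ℝ) + a) / t₀) < (p : ℝ)
              ∧ (p : ℝ) ≤ Real.exp (((n : ℝ) + a + ε n) / t₀)),
          (1 : ℝ) / p) ∧
      (∑ p ∈ (Finset.range (⌊Real.exp (((n : ℝ) + a + ε n) / t₀)⌋₊ + 1)).filter
            (fun p : ℕ => p.Prime ∧ Real.exp (((n : ℝ) + a) / t₀) < (p : ℝ)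
              ∧ (p : ℝ) ≤ Real.exp (((n : ℝ) + a + ε n) / t₀)),
          (1 : ℝ) / p) ≤ c₂ * ε n / n := by
  obtain ⟨K, c₁, c₂, hK, hc₁, hc₂, H⟩ := zz_final (1/t₀) (by positivity)
  have key : ∀ᶠ n : ℕ in atTop, c₁/2 * (ε n / n) ≤ (∑ p ∈ zzB (((n:ℝ)+a)/t₀) (ε n/t₀), (1:ℝ)/p) ∧
     (∑ p ∈ zzB (((n:ℝ)+a)/t₀) (ε n/t₀), (1:ℝ)/p) ≤ 2*c₂ * (ε n / n) := by
    have e1 : ∀ᶠ n : ℕ in atTop, 2*|a| + 2*K*t₀ + 1 ≤ (n:ℝ) :=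
      tendsto_natCast_atTop_atTop.eventually_ge_atTop _
    filter_upwards [e1, hnε.eventually_ge_atTop (2*K*t₀^2)] with n h1 h2
    obtain ⟨he0, he1⟩ := hε n
    have hKt : 0 < K*t₀ := by positivity
    have ha := abs_le.1 (le_refl |a|)
    have han := abs_nonneg a
    have hn0 : (0:ℝ) < n := by linarith
    have b1 : (n:ℝ)/2 ≤ n + a := by linarith [ha.1]
    have b2 : (n:ℝ) + a ≤ 2*n := by linarith [ha.2]
    have b3 : K * t₀ ≤ n + a := by linarith [ha.1]
    have := H (((n:ℝ)+a)/t₀) (ε n/t₀) (by positivity) (by gcongr) (by rw [le_div_iff₀ ht₀]; exact b3) (by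
      rw [div_mul_div_comm, le_div_iff₀ (by positivity)]
      nlinarith)
    have er : ε n/t₀ / (((n:ℝ)+a)/t₀) = ε n / (n+a) := by field_simp
    rw [er] at this
    have f1 : ε n / (2*n) ≤ ε n/(n+a) := by gcongr; linarith
    have f2 : ε n / (n+a) ≤ ε n/(n/2) := by gcongr
    refine ⟨le_trans ?_ this.1, this.2.trans ?_⟩
    · calc c₁/2 * (ε n / n) = c₁ * (ε n / (2*n)) := by field_simp
        _ ≤ _ := by gcongr
    · calc _ ≤ c₂ * (ε n / (n/2)) := by gcongr
        _ = _ := by field_simp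
  obtain ⟨N, hN⟩ := eventually_atTop.1 key
  refine ⟨c₁/2, max (c₁/2) (2*c₂), by positivity, le_max_left _ _, N, fun n hn => ?_⟩
  have h := hN n hn
  have e1 : ((n:ℝ)+a)/t₀ + ε n/t₀ = ((n : ℝ) + a + ε n) / t₀ := by ring
  unfold zzB at h
  rw [e1] at h
  rw [mul_div_assoc, mul_div_assoc]
  refine ⟨h.1, h.2.trans ?_⟩
  have := (hε n).1
  gcongr
  exact le_max_right _ _
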